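/- Let d ≥ 1 and let A : ℝ^d → ℝ be continuously differentiable with |A'(p)| ≤ A₂|p| for all p ∈ ℝ^d (A₂ ≥ 0) and with A' strongly monotone, i.e. (A'(p) − A'(q))·(p − q) ≥ c_A|p − q|² for all p, q ∈ ℝ^d and some c_A > 0, where A' = ∇A. Let φ : ℝ^d → ℝ be twice continuously differentiable and Q-periodic, and let w : ℝ^d → ℝ be Q-periodic, square-integrable over Q, and satisfy the weak divergence identity ∫_Q w ξ dx = ∫_Q A'(∇φ)·∇ξ dx for every continuously differentiable Q-periodic function ξ : ℝ^d → ℝ (so that w = −div(A'(∇φ)) in the weak sense). Then c_A ∫_Q |D²φ(x)|² dx ≤ −∫_Q w(x) Δφ(x) dx, where |D²φ| denotes the Frobenius norm of the Hessian of φ and Δφ its Laplacian. -/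

import Mathlib

open MeasureTheory
open scoped RealInnerProductSpace

/-!
Formally, differentiating `w = -div G(∇φ)` in a direction `e`, testing with `∂ₑφ` and using the
monotonicity of `G` gives `c ∫_Q |∇∂ₑφ|² ≤ -∫_Q w ∂ₑ∂ₑφ`, and one sums over an orthonormal basis.
Since `φ` is only `C²` the derivatives are replaced by differences: testing the equation with
`Δ_[-v] Δ_[v] φ` and summing by parts over a fundamental domain of the period lattice gives
`c ∫_Q |Δ_[v] ∇φ|² ≤ ∫_Q w Δ_[-v] Δ_[v] φ`. Put `v = t • e`, divide by `t²` and let `t → 0`; no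
limit of singular quotients occurs, because a difference quotient of a `C¹` function is a mean of
its derivative, which is continuous in `t` through `0`.
-/

open Function Set Bornology
open scoped ContDiff Pointwise fwdDiff

section SlopeAlong

variable {E F : Type*} [NormedAddCommGroup E] [NormedSpace ℝ E]
  [NormedAddCommGroup F] [NormedSpace ℝ F] {f : E → F}

theorem contDiff_fwdDiff {n : ℕ∞ω} (hf : ContDiff ℝ n f) (v : E) : ContDiff ℝ n (Δ_[v] f) := by
  unfold fwdDiff
  fun_prop

theorem fderiv_fwdDiff (hf : Differentiable ℝ f) (v x : E) :
    fderiv ℝ (Δ_[v] f) x = Δ_[v] (fderiv ℝ f) x := by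
  unfold fwdDiff
  rw [fderiv_fun_sub (by fun_prop) (hf x), fderiv_comp_add_right]

/-- The mean of the directional derivative `∂ₑf` over the segment from `x` to `x + t • e`. For `C¹`
functions it is the difference quotient `t⁻¹ • (f (x + t • e) - f x)`, in a form that is jointly
continuous in `(t, x)` up to and including `t = 0`. -/
noncomputable def slopeAlong (f : E → F) (e : E) (t : ℝ) (x : E) : F :=
  ∫ s in (0 : ℝ)..1, fderiv ℝ f (x + (s * t) • e) e

/-- The central second difference quotient `t⁻² • (f (x + t • e) - 2 • f x + f (x - t • e))` of a
`C²` function, again in a form that is jointly continuous in `(t, x)` up to `t = 0`. -/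
noncomputable def secondSlopeAlong (f : E → F) (e : E) (t : ℝ) (x : E) : F :=
  ∫ s in (0 : ℝ)..1, slopeAlong (fun y ↦ fderiv ℝ f y e) e t (x + (s * -t) • e)

theorem contDiff_fderiv_apply {m n : ℕ∞ω} (hf : ContDiff ℝ n f) (hmn : m + 1 ≤ n) (e : E) :
    ContDiff ℝ m fun y ↦ fderiv ℝ f y e :=
  (hf.fderiv_right hmn).clm_apply contDiff_const

theorem continuous_slopeAlong (hf : ContDiff ℝ 1 f) (e : E) :
    Continuous (uncurry (slopeAlong f e)) := by
  have := hf.continuous_fderiv one_ne_zero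
  simp only [uncurry_def, slopeAlong]
  fun_prop

theorem continuous_secondSlopeAlong (hf : ContDiff ℝ 2 f) (e : E) :
    Continuous (uncurry (secondSlopeAlong f e)) := by
  have := continuous_slopeAlong (contDiff_fderiv_apply hf one_add_one_eq_two.le e) e
  simp only [uncurry_def, secondSlopeAlong]
  fun_prop

variable [CompleteSpace F]

@[simp]
theorem slopeAlong_zero (f : E → F) (e x : E) : slopeAlong f e 0 x = fderiv ℝ f x e := by
  simp [slopeAlong]

@[simp]
theorem secondSlopeAlong_zero (f : E → F) (e x : E) :
    secondSlopeAlong f e 0 x = fderiv ℝ (fun y ↦ fderiv ℝ f y e) x e := by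
  simp [secondSlopeAlong]

theorem fwdDiff_eq_smul_slopeAlong (hf : ContDiff ℝ 1 f) (e : E) (t : ℝ) (x : E) :
    Δ_[t • e] f x = t • slopeAlong f e t x := by
  have hderiv (r : ℝ) : HasDerivAt (fun r : ℝ ↦ f (x + r • e)) (fderiv ℝ f (x + r • e) e) r := by
    have hline : HasDerivAt (fun r : ℝ ↦ x + r • e) e r := by
      simpa using ((hasDerivAt_id r).smul_const e).const_add x
    exact (hf.differentiable one_ne_zero _).hasFDerivAt.comp_hasDerivAt r hline
  have hcont : Continuous fun r : ℝ ↦ fderiv ℝ f (x + r • e) e := by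
    have := hf.continuous_fderiv one_ne_zero
    fun_prop
  have hftc := intervalIntegral.integral_unitInterval_deriv_eq_sub (z₀ := 0) (z₁ := t)
    (f' := fun r ↦ fderiv ℝ f (x + r • e) e) (hcont.comp (by fun_prop)).continuousOn
    fun s _ ↦ hderiv (0 + s • t)
  simpa [slopeAlong, fwdDiff] using hftc.symm

theorem fwdDiff_neg_fwdDiff_eq_smul_secondSlopeAlong (hf : ContDiff ℝ 2 f) (e : E) (t : ℝ) (x : E) :
    Δ_[-(t • e)] (Δ_[t • e] f) x = -(t ^ 2 • secondSlopeAlong f e t x) := by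
  have hf₁ : ContDiff ℝ 1 f := hf.of_le one_le_two
  have hfderiv (y : E) :
      fderiv ℝ (Δ_[t • e] f) y e = t • slopeAlong (fun y ↦ fderiv ℝ f y e) e t y := by
    rw [fderiv_fwdDiff (hf₁.differentiable one_ne_zero),
      ← fwdDiff_eq_smul_slopeAlong (contDiff_fderiv_apply hf one_add_one_eq_two.le e)]
    simp [fwdDiff]
  rw [← neg_smul, fwdDiff_eq_smul_slopeAlong (contDiff_fwdDiff hf₁ _), slopeAlong]
  simp only [hfderiv, intervalIntegral.integral_smul, secondSlopeAlong, smul_smul, neg_mul,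
    neg_smul, sq]

end SlopeAlong

section BoundedSets

variable {E : Type*} [MetricSpace E] [ProperSpace E] [MeasurableSpace E] {μ : Measure E}
  {Q : Set E}

theorem integrableOn_of_integrableOn_sq [IsFiniteMeasureOnCompacts μ] {w : E → ℝ}
    (hw : AEStronglyMeasurable w (μ.restrict Q)) (hw2 : IntegrableOn (fun x ↦ w x ^ 2) Q μ)
    (hQ : IsBounded Q) : IntegrableOn w Q μ := by
  have : IsFiniteMeasure (μ.restrict Q) := isFiniteMeasure_restrict.2 hQ.measure_lt_top.ne
  exact ((memLp_two_iff_integrable_sq hw).2 hw2).integrable one_le_two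

variable [OpensMeasurableSpace E]

theorem integrableOn_of_continuous_of_isBounded {F : Type*} [NormedAddCommGroup F]
    [IsFiniteMeasureOnCompacts μ] {f : E → F} (hf : Continuous f) (hQ : IsBounded Q) :
    IntegrableOn f Q μ :=
  (hf.continuousOn.integrableOn_compact hQ.isCompact_closure).mono_set subset_closure

theorem exists_ae_norm_le_of_isBounded {X F : Type*} [TopologicalSpace X]
    [WeaklyLocallyCompactSpace X] [NormedAddCommGroup F] {f : X → E → F}
    (hf : Continuous (uncurry f)) (hQ : IsBounded Q) (t₀ : X) :
    ∃ M, ∀ᶠ t in nhds t₀, ∀ᵐ x ∂μ.restrict Q, ‖f t x‖ ≤ M := by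
  obtain ⟨K, hK, hKt₀⟩ := exists_compact_mem_nhds t₀
  obtain ⟨M, hM⟩ := (hK.prod hQ.isCompact_closure).exists_bound_of_continuousOn hf.continuousOn
  refine ⟨M, Filter.eventually_of_mem hKt₀ fun t ht ↦ ?_⟩
  filter_upwards [ae_restrict_of_ae_restrict_of_subset subset_closure
    (ae_restrict_mem isClosed_closure.measurableSet)] with x hx
  exact hM (t, x) ⟨ht, hx⟩

theorem integrableOn_mul_of_continuous {w f : E → ℝ} (hw : IntegrableOn w Q μ)
    (hf : Continuous f) (hQ : IsBounded Q) : IntegrableOn (fun x ↦ w x * f x) Q μ := by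
  obtain ⟨M, hM⟩ := exists_ae_norm_le_of_isBounded (μ := μ) (f := fun _ : Unit ↦ f)
    (hf.comp continuous_snd) hQ ()
  exact hw.mul_bdd hf.aestronglyMeasurable hM.self_of_nhds

theorem continuous_setIntegral_mul {X : Type*} [TopologicalSpace X] [WeaklyLocallyCompactSpace X]
    [FirstCountableTopology X] {f : X → E → ℝ} (hf : Continuous (uncurry f)) (hQ : IsBounded Q)
    {w : E → ℝ} (hw : IntegrableOn w Q μ) : Continuous fun t ↦ ∫ x in Q, w x * f t x ∂μ := by
  refine continuous_iff_continuousAt.2 fun t₀ ↦ ?_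
  obtain ⟨M, hM⟩ := exists_ae_norm_le_of_isBounded (μ := μ) hf hQ t₀
  refine continuousAt_of_dominated (bound := fun x ↦ ‖w x‖ * M) ?_ ?_ (hw.norm.mul_const M) ?_
  · exact .of_forall fun t ↦ hw.aestronglyMeasurable.mul (hf.uncurry_left t).aestronglyMeasurable
  · filter_upwards [hM] with t ht
    filter_upwards [ht] with x hx
    rw [norm_mul]
    gcongr
  · exact .of_forall fun x ↦ (continuous_const.mul (hf.uncurry_right x)).continuousAt

end BoundedSets

section FundamentalDomain

theorem isAddFundamentalDomain_congr {G X : Type*} [AddGroup G] [Countable G] [AddAction G X]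
    [MeasurableSpace X] [MeasurableConstVAdd G X] {μ : Measure X} [VAddInvariantMeasure G X μ]
    {Q R : Set X} (hQ : IsAddFundamentalDomain G Q μ) (h : Q =ᵐ[μ] R) :
    IsAddFundamentalDomain G R μ where
  nullMeasurableSet := hQ.nullMeasurableSet.congr h
  ae_covers := by
    have htranslate (g : G) : ∀ᵐ x ∂μ, g +ᵥ x ∈ Q ↔ g +ᵥ x ∈ R :=
      (measurePreserving_vadd g μ).quasiMeasurePreserving.ae h.mem_iff
    filter_upwards [hQ.ae_covers, ae_all_iff.2 htranslate] with x ⟨g, hg⟩ hx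
    exact ⟨g, (hx g).1 hg⟩
  aedisjoint g₁ g₂ hne :=
    (hQ.aedisjoint hne).congr ((vadd_set_ae_eq g₁).2 h).symm ((vadd_set_ae_eq g₂).2 h).symm

variable {E F : Type*} [AddCommGroup E]

theorem periodic_of_mem_closure {S : Set E} {f : E → F} (hf : ∀ v ∈ S, Periodic f v) {l : E}
    (hl : l ∈ AddSubgroup.closure S) : Periodic f l := by
  induction hl using AddSubgroup.closure_induction with
  | mem v hv => exact hf v hv
  | zero => exact fun x ↦ by rw [add_zero]
  | add u v _ _ hu hv => exact hu.add_period hv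
  | neg v _ hv => exact hv.neg

theorem periodic_fwdDiff [AddCommGroup F] {f : E → F} {l : E} (hf : Periodic f l) (v : E) :
    Periodic (Δ_[v] f) l :=
  fun x ↦ by simp only [fwdDiff, add_right_comm x l v, hf _]

theorem setIntegral_comp_add_right_of_periodic [MeasurableSpace E] [MeasurableAdd E]
    {μ : Measure E} [μ.IsAddLeftInvariant] {L : AddSubgroup E} [Countable L] {Q : Set E}
    (hQ : IsAddFundamentalDomain L Q μ) [NormedAddCommGroup F] [NormedSpace ℝ F] {f : E → F}
    (hf : ∀ l ∈ L, Periodic f l) (v : E) : ∫ x in Q, f (x + v) ∂μ = ∫ x in Q, f x ∂μ := by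
  calc ∫ x in Q, f (x + v) ∂μ = ∫ x in v +ᵥ Q, f x ∂μ := by
        simp only [add_comm _ v]
        exact ((measurePreserving_vadd v μ).setIntegral_image_emb
          (measurableEmbedding_const_vadd v) f Q).symm
    _ = ∫ x in Q, f x ∂μ := (hQ.vadd_of_comm v).setIntegral_eq hQ fun l x ↦ by
        rw [AddSubgroup.vadd_def, vadd_eq_add, add_comm, hf l l.2]

end FundamentalDomain

section Gradient

variable {E : Type*} [NormedAddCommGroup E] [InnerProductSpace ℝ E] [CompleteSpace E] {f : E → ℝ}

theorem contDiff_gradient {m n : ℕ∞ω} (hf : ContDiff ℝ n f) (hmn : m + 1 ≤ n) :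
    ContDiff ℝ m (gradient f) :=
  (InnerProductSpace.toDual ℝ E).symm.contDiff.comp (hf.fderiv_right hmn)

theorem gradient_fwdDiff (hf : Differentiable ℝ f) (v x : E) :
    gradient (Δ_[v] f) x = Δ_[v] (gradient f) x := by
  simp only [gradient, fderiv_fwdDiff hf, fwdDiff, map_sub]

theorem periodic_gradient {l : E} (hf : Periodic f l) : Periodic (gradient f) l := fun x ↦ by
  rw [gradient, ← fderiv_comp_add_right, funext hf, gradient]

theorem sum_sq_fderiv_fderiv_apply_eq {ι : Type*} [Fintype ι] (b : OrthonormalBasis ι ℝ E)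
    {x : E} (hf : DifferentiableAt ℝ (gradient f) x) (e : E) :
    ∑ j, fderiv ℝ (fun y ↦ fderiv ℝ f y (b j)) x e ^ 2 = ‖fderiv ℝ (gradient f) x e‖ ^ 2 := by
  have hcoord (j : ι) : fderiv ℝ (fun y ↦ fderiv ℝ f y (b j)) x e =
      ⟪fderiv ℝ (gradient f) x e, b j⟫ := by
    simp only [← inner_gradient_left (f := f)]
    rw [fderiv_inner_apply ℝ hf (differentiableAt_const _)]
    simp
  simp only [hcoord, ← b.sum_sq_inner_left]

end Gradient

section PeriodicFields

variable {E : Type*} [NormedAddCommGroup E] [InnerProductSpace ℝ E] [FiniteDimensional ℝ E]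
  [MeasurableSpace E] [BorelSpace E] {μ : Measure E} [μ.IsAddHaarMeasure]
  {L : AddSubgroup E} [Countable L] {Q : Set E}

theorem setIntegral_inner_fwdDiff_neg (hQ : IsAddFundamentalDomain L Q μ) (hQb : IsBounded Q)
    {P R : E → E} (hP : Continuous P) (hR : Continuous R)
    (hPper : ∀ l ∈ L, Periodic P l) (hRper : ∀ l ∈ L, Periodic R l) (v : E) :
    ∫ x in Q, ⟪P x, Δ_[-v] R x⟫ ∂μ = ∫ x in Q, ⟪Δ_[v] P x, R x⟫ ∂μ := by
  have hint {f : E → ℝ} (hf : Continuous f) : IntegrableOn f Q μ :=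
    integrableOn_of_continuous_of_isBounded hf hQb
  have hshift : ∫ x in Q, ⟪P (x + v), R x⟫ ∂μ = ∫ x in Q, ⟪P x, R (x - v)⟫ ∂μ := by
    have := setIntegral_comp_add_right_of_periodic hQ (f := fun x ↦ ⟪P x, R (x - v)⟫)
      (fun l hl x ↦ by simp only [add_sub_right_comm x l v, hPper l hl _, hRper l hl _]) v
    simpa only [add_sub_cancel_right] using this
  simp only [fwdDiff, inner_sub_left, inner_sub_right, ← sub_eq_add_neg]
  rw [integral_sub (hint (by fun_prop)) (hint (by fun_prop)),
    integral_sub (hint (by fun_prop)) (hint (by fun_prop)), hshift]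

/-- The equation `w = -div P` on the torus `E ⧸ L` with fundamental domain `Q`, in the weak sense:
it is tested against the `C¹` functions with period lattice `L`. -/
def IsWeakNegDiv (L : AddSubgroup E) (Q : Set E) (μ : Measure E) (w : E → ℝ) (P : E → E) : Prop :=
  ∀ ξ : E → ℝ, ContDiff ℝ 1 ξ → (∀ l ∈ L, Periodic ξ l) →
    ∫ x in Q, w x * ξ x ∂μ = ∫ x in Q, ⟪P x, gradient ξ x⟫ ∂μ

variable {G : E → E} {c : ℝ} {φ w : E → ℝ}

theorem mul_setIntegral_norm_sq_fwdDiff_gradient_le (hQ : IsAddFundamentalDomain L Q μ)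
    (hQb : IsBounded Q) (hG : Continuous G) (hmono : ∀ p q, c * ‖p - q‖ ^ 2 ≤ ⟪G p - G q, p - q⟫)
    (hφ : ContDiff ℝ 2 φ) (hφper : ∀ l ∈ L, Periodic φ l)
    (hw : IsWeakNegDiv L Q μ w fun x ↦ G (gradient φ x)) (v : E) :
    c * ∫ x in Q, ‖Δ_[v] (gradient φ) x‖ ^ 2 ∂μ ≤
      ∫ x in Q, w x * Δ_[-v] (Δ_[v] φ) x ∂μ := by
  have hφ₁ : ContDiff ℝ 1 φ := hφ.of_le one_le_two
  have hg : Continuous (gradient φ) := (contDiff_gradient hφ one_add_one_eq_two.le).continuous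
  have hgper (l) (hl : l ∈ L) : Periodic (gradient φ) l := periodic_gradient (hφper l hl)
  have hΔφ : ContDiff ℝ 1 (Δ_[v] φ) := contDiff_fwdDiff hφ₁ v
  have hgradient (x : E) :
      gradient (Δ_[-v] (Δ_[v] φ)) x = Δ_[-v] (Δ_[v] (gradient φ)) x := by
    rw [gradient_fwdDiff (hΔφ.differentiable one_ne_zero),
      funext (gradient_fwdDiff (hφ₁.differentiable one_ne_zero) v)]
  have hΔg : Continuous (Δ_[v] (gradient φ)) := by unfold fwdDiff; fun_prop
  calc c * ∫ x in Q, ‖Δ_[v] (gradient φ) x‖ ^ 2 ∂μ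
      = ∫ x in Q, c * ‖Δ_[v] (gradient φ) x‖ ^ 2 ∂μ := (integral_const_mul _ _).symm
    _ ≤ ∫ x in Q, ⟪Δ_[v] (fun y ↦ G (gradient φ y)) x, Δ_[v] (gradient φ) x⟫ ∂μ := by
        refine integral_mono (integrableOn_of_continuous_of_isBounded (by fun_prop) hQb)
          (integrableOn_of_continuous_of_isBounded ?_ hQb) fun x ↦ hmono _ _
        simp only [fwdDiff]
        fun_prop
    _ = ∫ x in Q, ⟪G (gradient φ x), Δ_[-v] (Δ_[v] (gradient φ)) x⟫ ∂μ :=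
        (setIntegral_inner_fwdDiff_neg hQ hQb (hG.comp hg) hΔg
          (fun l hl ↦ (hgper l hl).comp G) (fun l hl ↦ periodic_fwdDiff (hgper l hl) v) v).symm
    _ = ∫ x in Q, w x * Δ_[-v] (Δ_[v] φ) x ∂μ := by
        simp only [← hgradient]
        exact (hw _ (contDiff_fwdDiff hΔφ _)
          fun l hl ↦ periodic_fwdDiff (periodic_fwdDiff (hφper l hl) v) _).symm

theorem mul_setIntegral_norm_sq_slopeAlong_gradient_le (hQ : IsAddFundamentalDomain L Q μ)
    (hQb : IsBounded Q) (hG : Continuous G) (hmono : ∀ p q, c * ‖p - q‖ ^ 2 ≤ ⟪G p - G q, p - q⟫)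
    (hφ : ContDiff ℝ 2 φ) (hφper : ∀ l ∈ L, Periodic φ l)
    (hw : IsWeakNegDiv L Q μ w fun x ↦ G (gradient φ x)) (e : E) {t : ℝ} (ht : t ≠ 0) :
    c * ∫ x in Q, ‖slopeAlong (gradient φ) e t x‖ ^ 2 ∂μ ≤
      -∫ x in Q, w x * secondSlopeAlong φ e t x ∂μ := by
  have hdiff := mul_setIntegral_norm_sq_fwdDiff_gradient_le hQ hQb hG hmono hφ hφper hw (t • e)
  simp only [fwdDiff_neg_fwdDiff_eq_smul_secondSlopeAlong hφ, norm_smul, mul_pow, Real.norm_eq_abs,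
    fwdDiff_eq_smul_slopeAlong (contDiff_gradient hφ one_add_one_eq_two.le), sq_abs, smul_eq_mul,
    mul_neg, integral_neg, mul_left_comm _ (t ^ 2), integral_const_mul] at hdiff
  exact le_of_mul_le_mul_left (hdiff.trans_eq (mul_neg _ _).symm) (by positivity)

theorem mul_setIntegral_norm_sq_fderiv_gradient_le (hQ : IsAddFundamentalDomain L Q μ)
    (hQb : IsBounded Q) (hG : Continuous G) (hmono : ∀ p q, c * ‖p - q‖ ^ 2 ≤ ⟪G p - G q, p - q⟫)
    (hφ : ContDiff ℝ 2 φ) (hφper : ∀ l ∈ L, Periodic φ l) (hwint : IntegrableOn w Q μ)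
    (hw : IsWeakNegDiv L Q μ w fun x ↦ G (gradient φ x)) (e : E) :
    c * ∫ x in Q, ‖fderiv ℝ (gradient φ) x e‖ ^ 2 ∂μ ≤
      -∫ x in Q, w x * fderiv ℝ (fun y ↦ fderiv ℝ φ y e) x e ∂μ := by
  have hleft : Continuous fun t ↦ c * ∫ x in Q, ‖slopeAlong (gradient φ) e t x‖ ^ 2 ∂μ := by
    have hsq : Continuous (uncurry fun t x ↦ ‖slopeAlong (gradient φ) e t x‖ ^ 2) :=
      (continuous_slopeAlong (contDiff_gradient hφ one_add_one_eq_two.le) e).norm.pow 2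
    have hone : IntegrableOn (fun _ ↦ (1 : ℝ)) Q μ :=
      integrableOn_of_continuous_of_isBounded continuous_const hQb
    simpa only [one_mul] using (continuous_setIntegral_mul hsq hQb hone).const_mul c
  have hright : Continuous fun t ↦ -∫ x in Q, w x * secondSlopeAlong φ e t x ∂μ :=
    (continuous_setIntegral_mul (continuous_secondSlopeAlong hφ e) hQb hwint).neg
  have hle (t : ℝ) : c * ∫ x in Q, ‖slopeAlong (gradient φ) e t x‖ ^ 2 ∂μ ≤
      -∫ x in Q, w x * secondSlopeAlong φ e t x ∂μ :=
    (dense_compl_singleton (0 : ℝ)).induction (P := fun t ↦ _ ≤ _)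
      (fun t ht ↦
        mul_setIntegral_norm_sq_slopeAlong_gradient_le hQ hQb hG hmono hφ hφper hw e ht)
      (isClosed_le hleft hright) t
  simpa only [slopeAlong_zero, secondSlopeAlong_zero] using hle 0

theorem anisotropic_H2_estimate_general {ι : Type*} [Fintype ι] (b : OrthonormalBasis ι ℝ E)
    (hQ : IsAddFundamentalDomain L Q μ) (hQb : IsBounded Q) (hG : Continuous G)
    (hmono : ∀ p q, c * ‖p - q‖ ^ 2 ≤ ⟪G p - G q, p - q⟫)
    (hφ : ContDiff ℝ 2 φ) (hφper : ∀ l ∈ L, Periodic φ l) (hwint : IntegrableOn w Q μ)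
    (hw : IsWeakNegDiv L Q μ w fun x ↦ G (gradient φ x)) :
    c * ∫ x in Q, ∑ i, ∑ j, fderiv ℝ (fun y ↦ fderiv ℝ φ y (b j)) x (b i) ^ 2 ∂μ ≤
      -∫ x in Q, w x * ∑ i, fderiv ℝ (fun y ↦ fderiv ℝ φ y (b i)) x (b i) ∂μ := by
  have hgrad : ContDiff ℝ 1 (gradient φ) := contDiff_gradient hφ one_add_one_eq_two.le
  have hD (i) : Continuous fun x ↦ ‖fderiv ℝ (gradient φ) x (b i)‖ ^ 2 := by
    have := hgrad.continuous_fderiv one_ne_zero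
    fun_prop
  have hD2 (i) : Continuous fun x ↦ fderiv ℝ (fun y ↦ fderiv ℝ φ y (b i)) x (b i) := by
    have := (contDiff_fderiv_apply hφ one_add_one_eq_two.le (b i)).continuous_fderiv one_ne_zero
    fun_prop
  have hwD2 (i) : IntegrableOn (fun x ↦ w x * fderiv ℝ (fun y ↦ fderiv ℝ φ y (b i)) x (b i)) Q μ :=
    integrableOn_mul_of_continuous hwint (hD2 i) hQb
  simp only [sum_sq_fderiv_fderiv_apply_eq b (hgrad.differentiable one_ne_zero _), Finset.mul_sum]
  rw [integral_finsetSum _ fun i _ ↦ integrableOn_of_continuous_of_isBounded (hD i) hQb,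
    integral_finsetSum _ fun i _ ↦ hwD2 i, Finset.mul_sum, ← Finset.sum_neg_distrib]
  gcongr with i
  exact mul_setIntegral_norm_sq_fderiv_gradient_le hQ hQb hG hmono hφ hφper hwint hw (b i)

end PeriodicFields
section Box

variable {ι : Type*}

section Lattice

variable [DecidableEq ι]

/-- The period lattice of the box `∏ i, (a i, c i)`, generated by its edge vectors
`(c i - a i) • eᵢ`. -/
noncomputable def boxLattice (a c : ι → ℝ) : AddSubgroup (EuclideanSpace ℝ ι) :=
  AddSubgroup.closure (range fun i ↦ (c i - a i) • EuclideanSpace.single i (1 : ℝ))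

variable {a c : ι → ℝ}

instance countable_boxLattice [Countable ι] : Countable (boxLattice a c) := by
  rw [boxLattice, ← Submodule.span_int_eq_addSubgroupClosure]
  exact inferInstanceAs (Countable (Submodule.span ℤ (range _)))

theorem forall_mem_boxLattice_periodic_iff {F : Type*} {f : EuclideanSpace ℝ ι → F} :
    (∀ l ∈ boxLattice a c, Periodic f l) ↔
      ∀ x i, f (x + (c i - a i) • EuclideanSpace.single i (1 : ℝ)) = f x :=
  ⟨fun hf x i ↦ hf _ (AddSubgroup.subset_closure (mem_range_self i)) x,
    fun hf _ ↦ periodic_of_mem_closure (forall_mem_range.2 fun i x ↦ hf x i)⟩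

end Lattice

theorem isBounded_box (a c : ι → ℝ) :
    IsBounded {x : EuclideanSpace ℝ ι | ∀ i, x i ∈ Ioo (a i) (c i)} := by
  have hpi : IsBounded (univ.pi fun i ↦ Ioo (a i) (c i)) :=
    .pi fun i ↦ Metric.isBounded_Ioo (a i) (c i)
  exact isBounded_induced.2 (hpi.subset (image_subset_iff.2 fun x hx i _ ↦ hx i))

variable [Fintype ι]

theorem ae_eq_box_Ico_Ioo (a c : ι → ℝ) :
    {x : EuclideanSpace ℝ ι | ∀ i, x i ∈ Ico (a i) (c i)} =ᵐ[volume]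
      {x | ∀ i, x i ∈ Ioo (a i) (c i)} := by
  have hpi := (Measure.univ_pi_Ico_ae_eq_Icc (μ := fun _ : ι ↦ (volume : Measure ℝ)) (f := a)
    (g := c)).trans Measure.univ_pi_Ioo_ae_eq_Icc.symm
  simpa [Set.pi] using! (PiLp.volume_preserving_ofLp ι).quasiMeasurePreserving.preimage_ae_eq hpi

theorem isAddFundamentalDomain_box [DecidableEq ι] {a c : ι → ℝ} (hac : ∀ i, a i < c i) :
    IsAddFundamentalDomain (boxLattice a c)
      {x : EuclideanSpace ℝ ι | ∀ i, x i ∈ Ioo (a i) (c i)} := by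
  have hside (i : ι) : 0 < c i - a i := sub_pos.2 (hac i)
  let p := (EuclideanSpace.basisFun ι ℝ).toBasis.isUnitSMul fun i ↦ (hside i).ne'.isUnit
  have hrepr (x : EuclideanSpace ℝ ι) (i : ι) : p.repr x i = x i / (c i - a i) := by
    simp [p, Module.Basis.repr_isUnitSMul, Units.smul_def, div_eq_inv_mul]
  have hspan : (Submodule.span ℤ (range p)).toAddSubgroup = boxLattice a c := by
    have hp : ⇑p = fun i ↦ (c i - a i) • EuclideanSpace.single i (1 : ℝ) := by
      ext1 i
      simp [p, Module.Basis.isUnitSMul_apply]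
    rw [Submodule.span_int_eq_addSubgroupClosure, hp, boxLattice]
  have hbox : WithLp.toLp 2 a +ᵥ ZSpan.fundamentalDomain p =
      {x : EuclideanSpace ℝ ι | ∀ i, x i ∈ Ico (a i) (c i)} := by
    ext x
    rw [mem_vadd_set_iff_neg_vadd_mem, ZSpan.mem_fundamentalDomain]
    refine forall_congr' fun i ↦ ?_
    rw [hrepr, mem_Ico, mem_Ico, le_div_iff₀ (hside i), div_lt_one (hside i)]
    simp [sub_eq_neg_add]
  have hIco := (ZSpan.isAddFundamentalDomain' p volume).vadd_of_comm (WithLp.toLp 2 a)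
  rw [hspan, hbox] at hIco
  exact isAddFundamentalDomain_congr hIco (ae_eq_box_Ico_Ioo a c)

end Box

/-- Let `A : ℝ^d → ℝ` be `C¹` with linear growth and strongly monotone
gradient `A' = ∇A`. Let `φ : ℝ^d → ℝ` be `C²` and `Q`-periodic, and let `w` be `Q`-periodic,
square-integrable over `Q`, with `∫_Q w ξ = ∫_Q A'(∇φ)·∇ξ` for every `C¹` `Q`-periodic `ξ`
(so `w = −div(A'(∇φ))` weakly). Then
`c_A ∫_Q |D²φ|² ≤ −∫_Q w Δφ`,
where `|D²φ|` is the Frobenius norm of the Hessian and `Δφ` the Laplacian. -/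
theorem anisotropic_H2_estimate
    (d : ℕ) (hd : 1 ≤ d)
    (A : EuclideanSpace ℝ (Fin d) → ℝ)
    (hA : ContDiff ℝ 1 A)
    (A₂ : ℝ) (hA₂ : 0 ≤ A₂)
    (hgrow : ∀ p : EuclideanSpace ℝ (Fin d), ‖gradient A p‖ ≤ A₂ * ‖p‖)
    (cA : ℝ) (hcA : 0 < cA)
    (hmono : ∀ p q : EuclideanSpace ℝ (Fin d),
        cA * ‖p - q‖ ^ 2 ≤ ⟪gradient A p - gradient A q, p - q⟫)
    (a c : Fin d → ℝ) (hac : ∀ i, a i < c i)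
    (Q : Set (EuclideanSpace ℝ (Fin d)))
    (hQ : Q = {x : EuclideanSpace ℝ (Fin d) | ∀ i, x i ∈ Set.Ioo (a i) (c i)})
    (φ : EuclideanSpace ℝ (Fin d) → ℝ)
    (hφ : ContDiff ℝ 2 φ)
    (hφper : ∀ (x : EuclideanSpace ℝ (Fin d)) (i : Fin d),
        φ (x + (c i - a i) • EuclideanSpace.single i (1 : ℝ)) = φ x)
    (w : EuclideanSpace ℝ (Fin d) → ℝ)
    (hwmeas : Measurable w)
    (hwper : ∀ (x : EuclideanSpace ℝ (Fin d)) (i : Fin d),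
        w (x + (c i - a i) • EuclideanSpace.single i (1 : ℝ)) = w x)
    (hwL2 : IntegrableOn (fun x => w x ^ 2) Q volume)
    (hweak : ∀ ξ : EuclideanSpace ℝ (Fin d) → ℝ, ContDiff ℝ 1 ξ →
        (∀ (x : EuclideanSpace ℝ (Fin d)) (i : Fin d),
          ξ (x + (c i - a i) • EuclideanSpace.single i (1 : ℝ)) = ξ x) →
        ∫ x in Q, w x * ξ x = ∫ x in Q, ⟪gradient A (gradient φ x), gradient ξ x⟫)
    (D2 : Fin d → Fin d → EuclideanSpace ℝ (Fin d) → ℝ)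
    (hD2 : ∀ (i j : Fin d) (x : EuclideanSpace ℝ (Fin d)),
        D2 i j x = fderiv ℝ (fun y => fderiv ℝ φ y (EuclideanSpace.single j (1 : ℝ))) x
          (EuclideanSpace.single i (1 : ℝ))) :
    cA * ∫ x in Q, ∑ i : Fin d, ∑ j : Fin d, (D2 i j x) ^ 2
      ≤ - ∫ x in Q, w x * ∑ i : Fin d, D2 i i x := by
  have hQb : IsBounded Q := hQ ▸ isBounded_box a c
  have hQL : IsAddFundamentalDomain (boxLattice a c) Q := hQ ▸ isAddFundamentalDomain_box hac
  have hG : Continuous (gradient A) := (contDiff_gradient hA (zero_add 1).le).continuous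
  have hwint : IntegrableOn w Q :=
    integrableOn_of_integrableOn_sq hwmeas.aestronglyMeasurable hwL2 hQb
  have hw : IsWeakNegDiv (boxLattice a c) Q volume w fun x ↦ gradient A (gradient φ x) :=
    fun ξ hξ hξper ↦ hweak ξ hξ (forall_mem_boxLattice_periodic_iff.1 hξper)
  simpa only [hD2, EuclideanSpace.basisFun_apply] using
    anisotropic_H2_estimate_general (EuclideanSpace.basisFun (Fin d) ℝ) hQL hQb hG hmono hφ
      (forall_mem_boxLattice_periodic_iff.2 hφper) hwint hw
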